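/- arXiv:1702.08433 — 2 statements merged into one kernel-verified Lean document; each statement's English description precedes it below -/
import Mathlib

section
/- Fix x ∈ ℝ^N and a sequence (φ^n)_{n∈ℕ} of convex Lipschitz functions φ^n : ℝ^N → ℝ. Define A_x((φ^n)_n) as the relative interior of the convex hull of the union of all nonempty, convex, relatively open sets V ⊆ ℝ^N with x ∈ V on which (φ^n)_n is asymptotically affine. Then: (a) x ∈ A_x((φ^n)_n) and A_x((φ^n)_n) is a nonempty, convex, relatively open set; (b) (φ^n)_n is asymptotically affine on A_x((φ^n)_n); (c) every nonempty, convex, relatively open set V with x ∈ V on which (φ^n)_n is asymptotically affine satisfies V ⊆ A_x((φ^n)_n). In particular, A_x((φ^n)_n) is the largest (for set inclusion) nonempty, convex, relatively open set containing x on which (φ^n)_n is asymptotically affine. -/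
/-! The key point is a single choice of affine minorants that works for every admissible `V` at
once. By Hahn–Banach each `φ n` has an affine minorant `g n` with gap `1 / (n + 1)` at `x`
(`exists_affine_minorant`). If `V ∋ x` is relatively open and `φ n - a n → 0` on `V`, then any
`y ∈ V` can be reflected through `x` to some `x + ε (x - y) ∈ V`; since the affine function
`a n - g n` is asymptotically nonnegative at both points and tends to `0` at the intermediate point
`x`, it tends to `0` at `y`, so `φ n - g n → 0` on `V` (`tendsto_sub_minorant`). As the functions
`φ n - g n` are convex and nonnegative, the set where they tend to `0` is convex
(`convex_setOf_tendsto`), hence contains the convex hull `C` of the union of all admissible `V`.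

The remaining claims are about relative interiors and rest on the fact that an open segment from a
relative interior point of a convex set to any of its points stays in the relative interior
(`lineSeg_mem_relint`). Every point of `C` can be prolonged a little beyond `x` within `C`, so `x`
is a relative interior point of `C`; every point `y` of an admissible `V` lies strictly between `x`
and some point of `V ⊆ C`, so it is one too. -/


open MeasureTheory Set Filter Topology

noncomputable section

/-- `E N` is `N`-dimensional Euclidean space. -/
abbrev E (N : ℕ) := EuclideanSpace ℝ (Fin N)

/-- A function is convex and Lipschitz. -/
def IsConvexLipschitz {N : ℕ} (φ : E N → ℝ) : Prop :=
  ConvexOn ℝ Set.univ φ ∧ ∃ K : NNReal, LipschitzWith K φ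

/-- A function is affine. -/
def IsAffineFn {N : ℕ} (a : E N → ℝ) : Prop :=
  ∃ f : E N →ᵃ[ℝ] ℝ, a = ⇑f

/-- `(φ n)_n` is asymptotically affine on `V`: there are affine functions `a n` with
`φ n y - a n y → 0` for every `y ∈ V`. -/
def AsympAffineOn {N : ℕ} (φ : ℕ → E N → ℝ) (V : Set (E N)) : Prop :=
  ∃ a : ℕ → E N → ℝ, (∀ n, IsAffineFn (a n)) ∧
    ∀ y ∈ V, Filter.Tendsto (fun n => φ n y - a n y) Filter.atTop (nhds 0)

/-- A set is relatively open if it equals its relative (intrinsic) interior. -/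
def IsRelOpen {N : ℕ} (V : Set (E N)) : Prop :=
  V = intrinsicInterior ℝ V

/-- The asymptotically affine component `A_x((φ^n)_n)`: the relative interior of the convex
hull of the union of all nonempty, convex, relatively open sets containing `x` on which
`(φ^n)_n` is asymptotically affine. -/
def Acomp {N : ℕ} (φ : ℕ → E N → ℝ) (x : E N) : Set (E N) :=
  intrinsicInterior ℝ (convexHull ℝ
    (⋃₀ {V : Set (E N) | V.Nonempty ∧ Convex ℝ V ∧ IsRelOpen V ∧ x ∈ V ∧ AsympAffineOn φ V}))

/-- The face of `D` containing `x` in its relative interior. -/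
def FaceAt {N : ℕ} (D : Set (E N)) (x : E N) : Set (E N) :=
  {y ∈ D | ∃ z ∈ D, ∃ t : ℝ, t ∈ Set.Ioo (0:ℝ) 1 ∧ x = t • y + (1 - t) • z}

/-- `E_x`: intersection over `k` of the closures of `A_x((φ^{k,n})_n)`. -/
def Ecomp {N : ℕ} (φ : ℕ → ℕ → E N → ℝ) (x : E N) : Set (E N) :=
  ⋂ k : ℕ, closure (Acomp (φ k) x)

/-- The convex component `C_x`: the relative interior of the face of `E_x` containing `x`. -/
def Ccomp {N : ℕ} (φ : ℕ → ℕ → E N → ℝ) (x : E N) : Set (E N) :=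
  intrinsicInterior ℝ (FaceAt (Ecomp φ x) x)

/-- Metric description of the relative interior: a ball around the point, cut with the affine span,
stays in the set. -/
lemma mem_relint_iff {N : ℕ} {s : Set (E N)} {p : E N} :
    p ∈ intrinsicInterior ℝ s ↔ p ∈ affineSpan ℝ s ∧
      ∃ ε > 0, ∀ q ∈ affineSpan ℝ s, dist q p < ε → q ∈ s := by
  rw [mem_intrinsicInterior]
  constructor
  · rintro ⟨y, hy, rfl⟩
    obtain ⟨ε, hε, h⟩ := Metric.mem_nhds_iff.1 (mem_interior_iff_mem_nhds.1 hy)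
    exact ⟨y.2, ε, hε, fun q hq hd => @h ⟨q, hq⟩ hd⟩
  · rintro ⟨hp, ε, hε, h⟩
    exact ⟨⟨p, hp⟩, mem_interior_iff_mem_nhds.2 (Metric.mem_nhds_iff.2
      ⟨ε, hε, fun q hq => h q q.2 hq⟩), rfl⟩

lemma relint_relint {N : ℕ} (s : Set (E N)) :
    intrinsicInterior ℝ (intrinsicInterior ℝ s) = intrinsicInterior ℝ s := by
  refine intrinsicInterior_subset.antisymm fun y hy => ?_
  obtain ⟨-, ε, hε, h⟩ := mem_relint_iff.1 hy
  refine mem_relint_iff.2 ⟨subset_affineSpan _ _ hy, ε, hε, fun q hq hqy => ?_⟩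
  have hq' : q ∈ affineSpan ℝ s := affineSpan_mono ℝ intrinsicInterior_subset hq
  refine mem_relint_iff.2 ⟨hq', ε - dist q y, by linarith, fun r hr hrq => h r hr ?_⟩
  linarith [dist_triangle r q y]

/-- An open segment from a relative interior point `c` to a point `z` of a convex set stays in the
relative interior: the homothety with centre `z` carries a neighbourhood of `c` along. -/
lemma lineSeg_mem_relint {N : ℕ} {s : Set (E N)} (hs : Convex ℝ s) {c z : E N}
    (hc : c ∈ intrinsicInterior ℝ s) (hz : z ∈ s) {a b : ℝ} (ha : 0 < a) (hb : 0 ≤ b)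
    (hab : a + b = 1) : a • c + b • z ∈ intrinsicInterior ℝ s := by
  obtain ⟨-, ε, hε, h⟩ := mem_relint_iff.1 hc
  have hzs := subset_affineSpan ℝ _ hz
  obtain rfl : b = 1 - a := by linarith
  refine mem_relint_iff.2 ⟨subset_affineSpan _ _
    (hs (intrinsicInterior_subset hc) hz ha.le hb hab), a * ε, by positivity, fun q hq hd => ?_⟩
  -- the preimage of `q` under the homothety with centre `z` and ratio `a`
  set c' : E N := AffineMap.lineMap z q a⁻¹ with hc'
  have hc'e : c' = a⁻¹ • (q - z) + z := by simp [hc', AffineMap.lineMap_apply]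
  have hqe : q = a • c' + (1 - a) • z := by
    rw [hc'e, smul_add, smul_smul, mul_inv_cancel₀ ha.ne']
    module
  have hc's : c' ∈ affineSpan ℝ s := AffineMap.lineMap_mem _ hzs hq
  have hd' : dist q (a • c + (1 - a) • z) = a * dist c' c := by
    rw [dist_eq_norm, dist_eq_norm]
    conv_lhs => rw [hqe]
    rw [add_sub_add_right_eq_sub, ← smul_sub, norm_smul, Real.norm_of_nonneg ha.le]
  rw [hd'] at hd
  rw [hqe]
  exact hs (h c' hc's (lt_of_mul_lt_mul_left hd ha.le)) hz ha.le hb hab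

lemma convex_relint {N : ℕ} {s : Set (E N)} (hs : Convex ℝ s) :
    Convex ℝ (intrinsicInterior ℝ s) := by
  refine convex_iff_openSegment_subset.2 ?_
  rintro p hp q hq _ ⟨a, b, ha, hb, hab, rfl⟩
  exact lineSeg_mem_relint hs hp (intrinsicInterior_subset hq) ha hb.le hab

/-- In a relatively open set, a segment from `y` to `x` can be prolonged beyond `x`. -/
lemma exists_prolong {N : ℕ} {V : Set (E N)} (hV : IsRelOpen V) {x y : E N}
    (hx : x ∈ V) (hy : y ∈ V) : ∃ ε > (0 : ℝ), x + ε • (x - y) ∈ V := by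
  have hx' := hx
  rw [hV] at hx'
  obtain ⟨hxs, r, hr, h⟩ := mem_relint_iff.1 hx'
  have hpos : 0 < ‖x - y‖ + 1 := by positivity
  refine ⟨r / (‖x - y‖ + 1), by positivity, h _ ?_ ?_⟩
  · have : x + (r / (‖x - y‖ + 1)) • (x - y)
        = AffineMap.lineMap x y (-(r / (‖x - y‖ + 1))) := by
      simp only [AffineMap.lineMap_apply, vsub_eq_sub, vadd_eq_add]
      module
    rw [this]
    exact AffineMap.lineMap_mem _ hxs (subset_affineSpan _ _ hy)
  · rw [dist_eq_norm, add_sub_cancel_left, norm_smul, Real.norm_of_nonneg (by positivity),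
      div_mul_eq_mul_div, div_lt_iff₀ hpos]
    nlinarith

lemma exists_affine_minorant {N : ℕ} {φ : E N → ℝ} (hφ : IsConvexLipschitz φ) (x : E N) {δ : ℝ}
    (hδ : 0 < δ) : ∃ g : E N →ᵃ[ℝ] ℝ, (∀ y, g y ≤ φ y) ∧ φ x - g x = δ := by
  obtain ⟨hc, K, hK⟩ := hφ
  obtain ⟨l, c, hle, hx⟩ := hc.exists_affine_le_of_lt (𝕜 := ℝ) (mem_univ x)
    (sub_lt_self (φ x) hδ) isClosed_univ
    (hK.continuous.lowerSemicontinuous.lowerSemicontinuousOn _)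
  refine ⟨(l : E N →ₗ[ℝ] ℝ).toAffineMap + AffineMap.const ℝ (E N) c, fun y => ?_, ?_⟩
  · simpa using hle ⟨y, mem_univ y⟩
  · simp at hx ⊢
    linarith

/-- If `φ n` is asymptotically affine on a relatively open `V ∋ x`, then affine minorants which are
asymptotically exact at `x` can serve as the approximating affine functions. -/
lemma tendsto_sub_minorant {N : ℕ} {φ : ℕ → E N → ℝ} {x : E N} {g : ℕ → E N →ᵃ[ℝ] ℝ}
    (hg : ∀ n y, g n y ≤ φ n y) (hgx : Tendsto (fun n => φ n x - g n x) atTop (𝓝 0))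
    {V : Set (E N)} (hV : IsRelOpen V) (hx : x ∈ V) (hA : AsympAffineOn φ V) {y : E N}
    (hy : y ∈ V) : Tendsto (fun n => φ n y - g n y) atTop (𝓝 0) := by
  obtain ⟨a, ha, hlim⟩ := hA
  choose f hf using ha
  obtain ⟨ε, hε, hz⟩ := exists_prolong hV hx hy
  set z := x + ε • (x - y) with hzdef
  have key (h : E N →ᵃ[ℝ] ℝ) : (1 + ε) * h x = ε * h y + h z := by
    have : z = AffineMap.lineMap x y (-ε) := by
      simp only [hzdef, AffineMap.lineMap_apply, vsub_eq_sub, vadd_eq_add]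
      module
    rw [this, AffineMap.apply_lineMap, AffineMap.lineMap_apply]
    simp only [vsub_eq_sub, vadd_eq_add, smul_eq_mul]
    ring
  have hup : Tendsto (fun n => (φ n y - a n y) +
      ((1 + ε) * ((φ n x - g n x) - (φ n x - a n x)) + (φ n z - a n z)) / ε) atTop (𝓝 0) := by
    have := (hlim y hy).add
      ((((hgx.sub (hlim x hx)).const_mul (1 + ε)).add (hlim z hz)).div_const ε)
    simpa using this
  refine squeeze_zero (fun n => sub_nonneg.2 (hg n y)) (fun n => ?_) hup
  have h1 := key (f n)
  have h2 := key (g n)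
  have h3 := hg n z
  rw [hf n]
  have : (φ n y - g n y) - (φ n y - f n y)
      ≤ ((1 + ε) * ((φ n x - g n x) - (φ n x - f n x)) + (φ n z - f n z)) / ε := by
    rw [le_div_iff₀ hε]
    nlinarith
  linarith

lemma convex_setOf_tendsto {N : ℕ} {φ : ℕ → E N → ℝ} (hφ : ∀ n, IsConvexLipschitz (φ n))
    {g : ℕ → E N →ᵃ[ℝ] ℝ} (hg : ∀ n y, g n y ≤ φ n y) :
    Convex ℝ {y | Tendsto (fun n => φ n y - g n y) atTop (𝓝 0)} := by
  intro p hp q hq a b ha hb hab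
  have hup := (Tendsto.const_mul a hp).add (Tendsto.const_mul b hq)
  simp only [mul_zero, add_zero] at hup
  refine squeeze_zero (fun n => sub_nonneg.2 (hg n _)) (fun n => ?_) hup
  have h1 := (hφ n).1.2 (mem_univ p) (mem_univ q) ha hb hab
  have h2 : g n (a • p + b • q) = a • g n p + b • g n q := Convex.combo_affine_apply hab
  rw [h2]
  simp only [smul_eq_mul] at h1 ⊢
  linarith

/-- `A_x((φ^n)_n)` is the largest nonempty, convex, relatively open set containing `x` on
which `(φ^n)_n` is asymptotically affine. -/
theorem stmt8 {N : ℕ} (φ : ℕ → E N → ℝ) (hφ : ∀ n, IsConvexLipschitz (φ n)) (x : E N) :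
    (x ∈ Acomp φ x ∧ (Acomp φ x).Nonempty ∧ Convex ℝ (Acomp φ x) ∧ IsRelOpen (Acomp φ x)) ∧
    AsympAffineOn φ (Acomp φ x) ∧
    (∀ V : Set (E N), V.Nonempty → Convex ℝ V → IsRelOpen V → x ∈ V →
      AsympAffineOn φ V → V ⊆ Acomp φ x) := by
  set S := {V : Set (E N) | V.Nonempty ∧ Convex ℝ V ∧ IsRelOpen V ∧ x ∈ V ∧ AsympAffineOn φ V}
    with hS
  set C := convexHull ℝ (⋃₀ S) with hC
  have hCc : Convex ℝ C := convex_convexHull ℝ _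
  have hVC {V} (hV : V ∈ S) : V ⊆ C :=
    (subset_sUnion_of_mem hV).trans (subset_convexHull ℝ _)
  have hxS : {x} ∈ S := by
    refine ⟨singleton_nonempty x, convex_singleton x, (intrinsicInterior_singleton x).symm,
      mem_singleton x, fun n _ => φ n x, fun n => ⟨AffineMap.const ℝ _ (φ n x), rfl⟩, ?_⟩
    rintro y rfl
    simp
  have hxC : x ∈ C := hVC hxS (mem_singleton x)
  have hprol : ∀ y ∈ C, ∃ ε > (0 : ℝ), x + ε • (x - y) ∈ C := by
    have hsub : C ⊆ {y | ∃ ε > (0 : ℝ), x + ε • (x - y) ∈ C} := by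
      refine convexHull_min ?_ ?_
      · rintro y ⟨V, hV, hy⟩
        obtain ⟨ε, hε, h⟩ := exists_prolong hV.2.2.1 hV.2.2.2.1 hy
        exact ⟨ε, hε, hVC hV h⟩
      · rintro p ⟨ε, hε, hp⟩ q ⟨δ, hδ, hq⟩ a b ha hb hab
        -- both prolongations can be shortened to the common length `min ε δ`
        have short {p : E N} {ε η : ℝ} (hε : 0 < ε) (hη : 0 < η) (hle : η ≤ ε)
            (hp : x + ε • (x - p) ∈ C) : x + η • (x - p) ∈ C := by
          have := hCc hxC hp (sub_nonneg.2 ((div_le_one hε).2 hle)) (by positivity : 0 ≤ η / ε)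
            (by ring)
          convert this using 1
          rw [smul_add, smul_smul, div_mul_cancel₀ _ hε.ne']
          module
        have hm : 0 < min ε δ := lt_min hε hδ
        refine ⟨min ε δ, hm, ?_⟩
        have := hCc (short hε hm (min_le_left _ _) hp) (short hδ hm (min_le_right _ _) hq) ha hb hab
        convert this using 1
        obtain rfl : b = 1 - a := by linarith
        module
    exact hsub
  have hxA : x ∈ intrinsicInterior ℝ C := by
    obtain ⟨c, hc⟩ := Set.Nonempty.intrinsicInterior hCc ⟨x, hxC⟩
    obtain ⟨ε, hε, h⟩ := hprol c (intrinsicInterior_subset hc)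
    have := lineSeg_mem_relint hCc hc h (a := ε / (1 + ε)) (b := 1 / (1 + ε)) (by positivity)
      (by positivity) (by field_simp; ring)
    convert this using 1
    match_scalars <;> field_simp <;> ring
  refine ⟨⟨hxA, ⟨x, hxA⟩, convex_relint hCc, (relint_relint C).symm⟩, ?_, ?_⟩
  · choose g hg hgx using fun n : ℕ =>
      exists_affine_minorant (hφ n) x (Nat.one_div_pos_of_nat (α := ℝ) (n := n))
    have hgx' : Tendsto (fun n => φ n x - g n x) atTop (𝓝 0) := by
      simp only [hgx]
      exact tendsto_one_div_add_atTop_nhds_zero_nat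
    refine ⟨fun n => g n, fun n => ⟨g n, rfl⟩, fun y hy => ?_⟩
    refine convexHull_min ?_ (convex_setOf_tendsto hφ hg) (intrinsicInterior_subset hy)
    rintro v ⟨V, hV, hv⟩
    exact tendsto_sub_minorant hg hgx' hV.2.2.1 hV.2.2.2.1 hV.2.2.2.2 hv
  · intro V h1 h2 h3 h4 h5 y hy
    obtain ⟨ε, hε, h⟩ := exists_prolong h3 hy h4
    have := lineSeg_mem_relint hCc hxA (hVC ⟨h1, h2, h3, h4, h5⟩ h) (a := ε / (1 + ε))
      (b := 1 / (1 + ε)) (by positivity) (by positivity) (by field_simp; ring)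
    change y ∈ intrinsicInterior ℝ C
    convert this using 1
    match_scalars <;> field_simp <;> ring
end
end

section
/- For each k ∈ ℕ let (φ^{k,n})_{n∈ℕ} be a sequence of convex Lipschitz functions φ^{k,n} : ℝ^N → ℝ. For x ∈ ℝ^N set A_x^k := A_x((φ^{k,n})_n), E_x := ⋂_{k∈ℕ} closure(A_x^k), and let C_x be the relative interior of the face F_x(E_x) := {y ∈ E_x : ∃ z ∈ E_x and t ∈ (0,1) with x = t·y + (1−t)·z}. Then the sets C_x form a convex partition of ℝ^N: each C_x is a nonempty, convex, relatively open set containing x, and for all x, y ∈ ℝ^N, if y ∈ C_x then C_y = C_x. -/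
/-! For one sequence `(φ n)` and a point `x`, subtract from `φ n` a supporting affine function at `x`.
The differences are nonnegative, convex and vanish at `x`. If `(φ n)` is asymptotically affine on a
convex relatively open `V ∋ x`, these differences tend to `0` on `V`: every segment in `V` ending
at `x` can be continued beyond `x`, and an asymptotically affine nonnegative sequence vanishing at
an interior point of a segment must tend to `0` on it. Hence one choice of affine functions serves
all such `V`, the convergence extends to their convex hull, and `Acomp φ x` is itself the largest
such `V` (`acomp_greatest`). Maximality shows that the sets `Acomp φ x` partition the space
(`acomp_eq_of_mem`).

For countably many sequences, a relative interior point `y` of the face of `Ecomp φ x` at `x` lies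
in the relatively open sets `Acomp (φ k) x` and not only in their closures (`ccomp_subset_acomp`),
so that `Acomp (φ k) y = Acomp (φ k) x` for all `k` and `Ecomp φ y = Ecomp φ x`. The faces at `x`
and `y` of this common convex set agree (`faceAt_eq_of_mem_ri`).

Relative interiors are handled through the criterion that `x` is in the relative interior of a
convex `S` exactly when every segment `[y, x]` in `S` can be continued to `x + ε • (x - y) ∈ S` for
some `ε > 0` (`prolong_of_ri`, `ri_of_forall_prolong`).
-/

open MeasureTheory Set Filter Topology

noncomputable section

/-! ### Relative interiors -/

/-- Metric description of the relative interior. -/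
lemma mem_ri_iff {N : ℕ} {S : Set (E N)} {x : E N} :
    x ∈ intrinsicInterior ℝ S ↔ x ∈ affineSpan ℝ S ∧
      ∃ δ > 0, ∀ y ∈ affineSpan ℝ S, dist y x < δ → y ∈ S := by
  rw [mem_intrinsicInterior]
  constructor
  · rintro ⟨y, hy, rfl⟩
    obtain ⟨δ, hδ, hb⟩ := Metric.mem_nhds_iff.1 (mem_interior_iff_mem_nhds.1 hy)
    exact ⟨y.2, δ, hδ, fun z hz hd => hb (show dist (⟨z, hz⟩ : affineSpan ℝ S) y < δ from hd)⟩
  · rintro ⟨hx, δ, hδ, h⟩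
    refine ⟨⟨x, hx⟩, mem_interior_iff_mem_nhds.2 (Metric.mem_nhds_iff.2 ⟨δ, hδ, ?_⟩), rfl⟩
    intro z hz
    exact h z z.2 hz

/-- A segment that starts in the relative interior and ends in the closure stays in the relative
interior until its endpoint. -/
lemma ri_of_combo {N : ℕ} {S : Set (E N)} (hS : Convex ℝ S) {u w : E N}
    (hu : u ∈ intrinsicInterior ℝ S) (hw : w ∈ closure S) {a b : ℝ} (ha : 0 < a) (hb : 0 ≤ b)
    (hab : a + b = 1) : a • u + b • w ∈ intrinsicInterior ℝ S := by
  obtain ⟨huS, δ, hδ, hball⟩ := mem_ri_iff.1 hu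
  have hwS : w ∈ affineSpan ℝ S :=
    closure_minimal (subset_affineSpan ℝ S)
      (AffineSubspace.closed_of_finiteDimensional (affineSpan ℝ S)) hw
  refine mem_ri_iff.2 ⟨?_, a * δ / 2, by positivity, ?_⟩
  · have := AffineMap.lineMap_mem a hwS huS
    rw [AffineMap.lineMap_apply_module] at this
    convert this using 1
    rw [show 1 - a = b by linarith, add_comm]
  · intro y hy hd
    obtain ⟨w', hw'S, hw'⟩ := Metric.mem_closure_iff.1 hw (a * δ / 2) (by positivity)
    -- `y = a • u' + b • w'` with `u'` in the affine span and close to `u`.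
    have hmem := AffineMap.lineMap_mem (1 / a) (subset_affineSpan ℝ S hw'S) hy
    rw [AffineMap.lineMap_apply_module] at hmem
    set u' := (1 - 1 / a) • w' + (1 / a) • y with hu'
    have hau' : a • u' = y - b • w' := by
      rw [hu', smul_add, smul_smul, smul_smul, show a * (1 - 1 / a) = -b by field_simp; linarith,
        show a * (1 / a) = 1 by field_simp]
      module
    have hd' : dist u' u < δ := by
      have h1 : a * dist u' u < a * δ := by
        rw [dist_eq_norm] at hd hw' ⊢
        have e : a • (u' - u) = (y - (a • u + b • w)) + b • (w - w') := by
          rw [smul_sub, hau']; module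
        have h2 : a * ‖u' - u‖ = ‖a • (u' - u)‖ := by
          rw [norm_smul, Real.norm_of_nonneg ha.le]
        rw [h2, e]
        have h3 : ‖b • (w - w')‖ ≤ ‖w - w'‖ := by
          rw [norm_smul, Real.norm_of_nonneg hb]
          nlinarith [norm_nonneg (w - w')]
        linarith [norm_add_le (y - (a • u + b • w)) (b • (w - w'))]
      exact lt_of_mul_lt_mul_left h1 ha.le
    have hfin := hS (hball u' hmem hd') hw'S ha.le hb hab
    rwa [hau', sub_add_cancel] at hfin

/-- If a segment from a relative interior point `u` to the closure can be continued beyond `x`,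
then `x` lies in the relative interior. -/
lemma ri_of_prolong {N : ℕ} {S : Set (E N)} (hS : Convex ℝ S) {u x : E N}
    (hu : u ∈ intrinsicInterior ℝ S) {ε : ℝ} (hε : 0 < ε)
    (hx : x + ε • (x - u) ∈ closure S) : x ∈ intrinsicInterior ℝ S := by
  have h := ri_of_combo hS hu hx (a := ε / (1 + ε)) (b := 1 / (1 + ε)) (by positivity)
    (by positivity) (by field_simp; ring)
  convert h using 1
  match_scalars <;> field_simp <;> ring

/-- Segments in `S` ending at a relative interior point can be continued inside `S`. -/
lemma prolong_of_ri {N : ℕ} {S : Set (E N)} {x y : E N}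
    (hx : x ∈ intrinsicInterior ℝ S) (hy : y ∈ S) : ∃ ε > (0 : ℝ), x + ε • (x - y) ∈ S := by
  obtain ⟨hxS, δ, hδ, hball⟩ := mem_ri_iff.1 hx
  have hpos : 0 < ‖x - y‖ + 1 := by positivity
  refine ⟨δ / (‖x - y‖ + 1), by positivity, hball _ ?_ ?_⟩
  · have := AffineMap.lineMap_mem (1 + δ / (‖x - y‖ + 1)) (subset_affineSpan ℝ S hy) hxS
    rw [AffineMap.lineMap_apply_module] at this
    convert this using 1
    module
  · rw [dist_eq_norm, add_sub_cancel_left, norm_smul, Real.norm_of_nonneg (by positivity),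
      div_mul_eq_mul_div, div_lt_iff₀ hpos]
    nlinarith

/-- Algebraic criterion for relative interior points of a convex set: every segment ending at `x`
can be continued. -/
lemma ri_of_forall_prolong {N : ℕ} {S : Set (E N)} (hS : Convex ℝ S) {x : E N} (hx : x ∈ S)
    (h : ∀ y ∈ S, ∃ ε > (0 : ℝ), x + ε • (x - y) ∈ S) : x ∈ intrinsicInterior ℝ S := by
  obtain ⟨u, hu⟩ := Set.Nonempty.intrinsicInterior hS ⟨x, hx⟩
  obtain ⟨ε, hε, hz⟩ := h u (intrinsicInterior_subset hu)
  exact ri_of_prolong hS hu hε (subset_closure hz)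

lemma convex_ri {N : ℕ} {S : Set (E N)} (hS : Convex ℝ S) :
    Convex ℝ (intrinsicInterior ℝ S) := by
  intro x hx y hy a b ha hb hab
  rcases ha.eq_or_lt with rfl | ha
  · obtain rfl : b = 1 := by linarith
    simpa using hy
  · exact ri_of_combo hS hx (subset_closure (intrinsicInterior_subset hy)) ha hb hab

lemma prolong_ri_of_ri {N : ℕ} {S : Set (E N)} (hS : Convex ℝ S) {x y : E N}
    (hx : x ∈ intrinsicInterior ℝ S) (hy : y ∈ S) :
    ∃ ε > (0 : ℝ), x + ε • (x - y) ∈ intrinsicInterior ℝ S := by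
  obtain ⟨ε, hε, hz⟩ := prolong_of_ri hx hy
  refine ⟨ε / 2, by positivity, ?_⟩
  have := ri_of_combo hS hx (subset_closure hz) (a := 1 / 2) (b := 1 / 2) (by norm_num)
    (by norm_num) (by norm_num)
  convert this using 1
  module

lemma isRelOpen_ri {N : ℕ} {S : Set (E N)} (hS : Convex ℝ S) :
    IsRelOpen (intrinsicInterior ℝ S) :=
  Subset.antisymm
    (fun _ hx => ri_of_forall_prolong (convex_ri hS) hx fun _ hy =>
      prolong_ri_of_ri hS hx (intrinsicInterior_subset hy))
    intrinsicInterior_subset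

/-! ### Faces -/

lemma mem_faceAt_iff {N : ℕ} {D : Set (E N)} {x y : E N} :
    y ∈ FaceAt D x ↔ y ∈ D ∧ ∃ ε > (0 : ℝ), x + ε • (x - y) ∈ D := by
  refine and_congr_right fun _ => ⟨?_, ?_⟩
  · rintro ⟨z, hz, t, ⟨ht0, ht1⟩, hx⟩
    have h1 : 0 < 1 - t := by linarith
    refine ⟨t / (1 - t), by positivity, ?_⟩
    convert hz using 1
    rw [hx]
    match_scalars <;> field_simp <;> ring
  · rintro ⟨ε, hε, hz⟩
    refine ⟨_, hz, ε / (1 + ε), ⟨by positivity, ?_⟩, ?_⟩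
    · rw [div_lt_one (by positivity)]; linarith
    · match_scalars <;> field_simp <;> ring

/-- Prolongations of a segment can be shortened. -/
lemma prolong_mono {N : ℕ} {D : Set (E N)} (hD : Convex ℝ D) {x y : E N} (hx : x ∈ D)
    {ε ε' : ℝ} (hε' : 0 ≤ ε') (hle : ε' ≤ ε) (hε : 0 < ε) (hz : x + ε • (x - y) ∈ D) :
    x + ε' • (x - y) ∈ D := by
  have h := hD hx hz (a := 1 - ε' / ε) (b := ε' / ε)
    (by rw [sub_nonneg, div_le_one hε]; exact hle) (by positivity) (by ring)
  convert h using 1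
  match_scalars <;> field_simp <;> ring

lemma self_mem_faceAt {N : ℕ} {D : Set (E N)} {x : E N} (hx : x ∈ D) : x ∈ FaceAt D x :=
  mem_faceAt_iff.2 ⟨hx, 1, one_pos, by simpa using hx⟩

lemma convex_faceAt {N : ℕ} {D : Set (E N)} (hD : Convex ℝ D) {x : E N} (hx : x ∈ D) :
    Convex ℝ (FaceAt D x) := by
  intro y hy z hz a b ha hb hab
  rw [mem_faceAt_iff] at hy hz ⊢
  obtain ⟨hyD, ε, hε, hy'⟩ := hy
  obtain ⟨hzD, η, hη, hz'⟩ := hz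
  have hm : 0 < min ε η := lt_min hε hη
  refine ⟨hD hyD hzD ha hb hab, min ε η, hm, ?_⟩
  have h := hD (prolong_mono hD hx hm.le (min_le_left _ _) hε hy')
    (prolong_mono hD hx hm.le (min_le_right _ _) hη hz') ha hb hab
  convert h using 1
  obtain rfl : b = 1 - a := by linarith
  module

lemma faceAt_prolong {N : ℕ} {D : Set (E N)} {x y : E N} (hy : y ∈ FaceAt D x) :
    ∃ ε > (0 : ℝ), x + ε • (x - y) ∈ FaceAt D x := by
  obtain ⟨hyD, ε, hε, hz⟩ := mem_faceAt_iff.1 hy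
  refine ⟨ε, hε, mem_faceAt_iff.2 ⟨hz, 1 / ε, by positivity, ?_⟩⟩
  convert hyD using 1
  match_scalars <;> field_simp <;> ring

lemma mem_ri_faceAt {N : ℕ} {D : Set (E N)} (hD : Convex ℝ D) {x : E N} (hx : x ∈ D) :
    x ∈ intrinsicInterior ℝ (FaceAt D x) :=
  ri_of_forall_prolong (convex_faceAt hD hx) (self_mem_faceAt hx) fun _ => faceAt_prolong

/-- A face is the face of each of its relative interior points. -/
lemma faceAt_eq_of_mem_ri {N : ℕ} {D : Set (E N)} (hD : Convex ℝ D) {x y : E N}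
    (hy : y ∈ intrinsicInterior ℝ (FaceAt D x)) : FaceAt D y = FaceAt D x := by
  ext w
  constructor
  · intro hw
    obtain ⟨hwD, ε, hε, hz⟩ := mem_faceAt_iff.1 hw
    obtain ⟨-, η, hη, hz'⟩ := mem_faceAt_iff.1 (intrinsicInterior_subset hy)
    -- Eliminating `y` from `y ∈ (w, z)` and `x ∈ (y, z')` gives `x ∈ (w, z'')`, `z'' ∈ [z, z']`.
    refine mem_faceAt_iff.2 ⟨hwD, η * ε / (1 + ε + η), by positivity, ?_⟩
    have h := hD hz hz' (a := η / (1 + ε + η)) (b := (1 + ε) / (1 + ε + η)) (by positivity)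
      (by positivity) (by field_simp; ring)
    convert h using 1
    match_scalars <;> field_simp <;> ring
  · intro hw
    obtain ⟨ε, hε, hz⟩ := prolong_of_ri hy hw
    exact mem_faceAt_iff.2 ⟨(mem_faceAt_iff.1 hw).1, ε, hε, (mem_faceAt_iff.1 hz).1⟩

/-! ### Asymptotically affine components of one sequence -/

/-- Existence of a subgradient: separate `(x, φ x)` from the strict epigraph of `φ`. -/
lemma exists_subgradient {N : ℕ} {φ : E N → ℝ} (hφ : IsConvexLipschitz φ) (x : E N) :
    ∃ p : E N →ₗ[ℝ] ℝ, ∀ y, φ x + p (y - x) ≤ φ y := by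
  obtain ⟨hc, K, hK⟩ := hφ
  have hconv : Convex ℝ {q : E N × ℝ | q.1 ∈ (univ : Set (E N)) ∧ φ q.1 < q.2} :=
    hc.convex_strict_epigraph
  have hopen : IsOpen {q : E N × ℝ | q.1 ∈ (univ : Set (E N)) ∧ φ q.1 < q.2} := by
    simp only [mem_univ, true_and]
    exact isOpen_lt (hK.continuous.comp continuous_fst) continuous_snd
  obtain ⟨f, hf⟩ := geometric_hahn_banach_open_point hconv hopen (x := (x, φ x)) (by simp)
  have hdec : ∀ y t, f (y, t) = f (y, 0) + t * f (0, 1) := by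
    intro y t
    have : ((y, t) : E N × ℝ) = (y, 0) + t • (0, 1) := by simp
    rw [this, map_add, map_smul, smul_eq_mul]
  set c := f (0, 1) with hcdef
  have hcneg : c < 0 := by
    have := hf (x, φ x + 1) (by simp)
    rw [hdec x (φ x + 1), hdec x (φ x)] at this
    linarith
  refine ⟨(-c)⁻¹ • (f.toLinearMap ∘ₗ LinearMap.inl ℝ (E N) ℝ), fun y => ?_⟩
  have hle : f (y, φ y) ≤ f (x, φ x) := by
    refine le_of_forall_pos_le_add fun ε hε => ?_
    have := hf (y, φ y + ε / (-c)) (by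
      simp only [mem_univ, true_and, mem_ofPred_eq, lt_add_iff_pos_right]
      exact div_pos hε (by linarith))
    rw [hdec y] at this ⊢
    have hc0 : c ≠ 0 := hcneg.ne
    have h2 : ε / (-c) * c = -ε := by field_simp
    nlinarith
  rw [hdec y, hdec x] at hle
  have hsub : f (y - x, 0) = f (y, 0) - f (x, 0) := by
    rw [← map_sub]; simp
  simp only [LinearMap.smul_apply, LinearMap.comp_apply, LinearMap.inl_apply, smul_eq_mul,
    ContinuousLinearMap.coe_coe, hsub]
  have hc' : 0 < -c := by linarith
  have : (-c)⁻¹ * (f (y, 0) - f (x, 0)) ≤ φ y - φ x := by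
    rw [inv_mul_le_iff₀ hc']; nlinarith
  linarith

/-- The family of sets whose union defines `Acomp φ x`. -/
def AffFamily {N : ℕ} (φ : ℕ → E N → ℝ) (x : E N) : Set (Set (E N)) :=
  {V : Set (E N) | V.Nonempty ∧ Convex ℝ V ∧ IsRelOpen V ∧ x ∈ V ∧ AsympAffineOn φ V}

/-- There is a single sequence of affine functions, namely supporting functions of `φ n` at `x`,
approximating `φ n` on every member of the family at `x`. The set `Z` where this approximation
holds is convex because the differences are nonnegative and convex. -/
lemma exists_common_set {N : ℕ} {φ : ℕ → E N → ℝ} (hφ : ∀ n, IsConvexLipschitz (φ n))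
    (x : E N) : ∃ Z : Set (E N), Convex ℝ Z ∧ x ∈ Z ∧ AsympAffineOn φ Z ∧
      ∀ V ∈ AffFamily φ x, V ⊆ Z := by
  choose p hp using fun n => exists_subgradient (hφ n) x
  let l : ℕ → E N →ᵃ[ℝ] ℝ := fun n =>
    (p n).toAffineMap + AffineMap.const ℝ (E N) (φ n x - p n x)
  have hl : ∀ n y, l n y = φ n x + p n (y - x) := by
    intro n y
    simp only [l, AffineMap.coe_add, Pi.add_apply, LinearMap.coe_toAffineMap,
      AffineMap.const_apply, map_sub]
    ring
  have hle : ∀ n y, 0 ≤ φ n y - l n y := fun n y => by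
    rw [hl]; linarith [hp n y]
  have hlx : ∀ n, φ n x - l n x = 0 := fun n => by simp [hl]
  have haff : ∀ (f : E N →ᵃ[ℝ] ℝ) (u v : E N) (a b : ℝ), a + b = 1 →
      f (a • u + b • v) = a * f u + b * f v := by
    intro f u v a b hab
    rw [Convex.combo_affine_apply hab, smul_eq_mul, smul_eq_mul]
  refine ⟨{y | Tendsto (fun n => φ n y - l n y) atTop (𝓝 0)}, ?_, ?_, ?_, ?_⟩
  · intro u hu v hv a b ha hb hab
    refine squeeze_zero (fun n => hle n _) (fun n => ?_)
      (by simpa using (hu.const_mul a).add (hv.const_mul b))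
    have := (hφ n).1.2 (mem_univ u) (mem_univ v) ha hb hab
    rw [smul_eq_mul, smul_eq_mul] at this
    rw [haff _ _ _ _ _ hab]
    linarith
  · simp [hlx]
  · exact ⟨fun n => l n, fun n => ⟨l n, rfl⟩, fun y hy => hy⟩
  · rintro V ⟨-, -, hVo, hxV, a, ha, hat⟩ y hy
    have hxr : x ∈ intrinsicInterior ℝ V := by rw [← hVo]; exact hxV
    obtain ⟨ε, hε, hz⟩ := prolong_of_ri hxr hy
    set z := x + ε • (x - y) with hzdef
    -- The gap at `y` is bounded by a combination of the errors of `a n` at `y`, `z` and `x`.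
    have h1 := (((hat z hz).add ((hat y hy).const_mul ε)).sub
      ((hat x hxV).const_mul (1 + ε))).const_mul (1 / ε)
    simp only [mul_zero, add_zero, sub_zero] at h1
    refine squeeze_zero (fun n => hle n _) (fun n => ?_) h1
    obtain ⟨f, hf⟩ := ha n
    have e1 : f z = (1 + ε) * f x + -ε * f y := by
      rw [← haff _ _ _ _ _ (by ring), hzdef]; congr 1; module
    have e2 : l n z = (1 + ε) * l n x + -ε * l n y := by
      rw [← haff _ _ _ _ _ (by ring), hzdef]; congr 1; module
    rw [hf, div_mul_eq_mul_div, one_mul, le_div_iff₀ hε]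
    have := hle n z
    have := hlx n
    rw [e1]
    nlinarith

lemma acomp_eq {N : ℕ} (φ : ℕ → E N → ℝ) (x : E N) :
    Acomp φ x = intrinsicInterior ℝ (convexHull ℝ (⋃₀ AffFamily φ x)) := rfl

/-- `Acomp φ x` is the largest member of the family at `x`. -/
lemma acomp_greatest {N : ℕ} {φ : ℕ → E N → ℝ} (hφ : ∀ n, IsConvexLipschitz (φ n))
    (x : E N) : Acomp φ x ∈ AffFamily φ x ∧ ∀ V ∈ AffFamily φ x, V ⊆ Acomp φ x := by
  obtain ⟨Z, hZ, hxZ, ⟨a, ha, hat⟩, hVZ⟩ := exists_common_set hφ x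
  rw [acomp_eq]
  set S := convexHull ℝ (⋃₀ AffFamily φ x) with hSdef
  have hS : Convex ℝ S := convex_convexHull ℝ _
  have hVS : ∀ V ∈ AffFamily φ x, V ⊆ S := fun V hV =>
    (subset_sUnion_of_mem hV).trans (subset_convexHull ℝ _)
  have hSF : S ⊆ FaceAt Z x := by
    refine convexHull_min (sUnion_subset fun V hV y hy => ?_) (convex_faceAt hZ hxZ)
    have hxr : x ∈ intrinsicInterior ℝ V := by rw [← hV.2.2.1]; exact hV.2.2.2.1
    obtain ⟨ε, hε, hz⟩ := prolong_of_ri hxr hy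
    exact mem_faceAt_iff.2 ⟨hVZ V hV hy, ε, hε, hVZ V hV hz⟩
  have hF := convex_faceAt hZ hxZ
  have hxF := mem_ri_faceAt hZ hxZ
  have hriF : intrinsicInterior ℝ (FaceAt Z x) ∈ AffFamily φ x :=
    ⟨⟨x, hxF⟩, convex_ri hF, isRelOpen_ri hF, hxF, a, ha,
      fun y hy => hat y (intrinsicInterior_subset hy).1⟩
  have hxS : x ∈ intrinsicInterior ℝ S := by
    refine ri_of_forall_prolong hS (hVS _ hriF hxF) fun y hy => ?_
    obtain ⟨ε, hε, hz⟩ := prolong_ri_of_ri hF hxF (hSF hy)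
    exact ⟨ε, hε, hVS _ hriF hz⟩
  refine ⟨⟨⟨x, hxS⟩, convex_ri hS, isRelOpen_ri hS, hxS, a, ha,
    fun y hy => hat y (hSF (intrinsicInterior_subset hy)).1⟩, fun V hV y hy => ?_⟩
  have hyr : y ∈ intrinsicInterior ℝ V := by rw [← hV.2.2.1]; exact hy
  obtain ⟨ε, hε, hz⟩ := prolong_of_ri hyr hV.2.2.2.1
  exact ri_of_prolong hS hxS hε (subset_closure (hVS V hV hz))

lemma acomp_eq_of_mem {N : ℕ} {φ : ℕ → E N → ℝ} (hφ : ∀ n, IsConvexLipschitz (φ n))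
    {x y : E N} (hy : y ∈ Acomp φ x) : Acomp φ y = Acomp φ x := by
  obtain ⟨⟨hne, hc, ho, hx, ha⟩, hmax⟩ := acomp_greatest hφ x
  obtain ⟨⟨hne', hc', ho', -, ha'⟩, hmax'⟩ := acomp_greatest hφ y
  have h : Acomp φ x ⊆ Acomp φ y := hmax' _ ⟨hne, hc, ho, hy, ha⟩
  exact Subset.antisymm (hmax _ ⟨hne', hc', ho', h hx, ha'⟩) h

/-! ### Convex components -/

lemma convex_ecomp {N : ℕ} {φ : ℕ → ℕ → E N → ℝ} (hφ : ∀ k n, IsConvexLipschitz (φ k n))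
    (x : E N) : Convex ℝ (Ecomp φ x) :=
  convex_iInter fun k => (acomp_greatest (hφ k) x).1.2.1.closure

lemma mem_ecomp {N : ℕ} {φ : ℕ → ℕ → E N → ℝ} (hφ : ∀ k n, IsConvexLipschitz (φ k n))
    (x : E N) : x ∈ Ecomp φ x :=
  mem_iInter.2 fun k => subset_closure (acomp_greatest (hφ k) x).1.2.2.2.1

/-- Points of `Ccomp φ x` lie in each `Acomp (φ k) x`, not just in its closure: the segment
from `x` to such a point can be continued in the closure. -/
lemma ccomp_subset_acomp {N : ℕ} {φ : ℕ → ℕ → E N → ℝ}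
    (hφ : ∀ k n, IsConvexLipschitz (φ k n)) (x : E N) (k : ℕ) :
    Ccomp φ x ⊆ Acomp (φ k) x := by
  intro y hy
  obtain ⟨⟨-, hc, ho, hx, -⟩, -⟩ := acomp_greatest (hφ k) x
  obtain ⟨ε, hε, hz⟩ := prolong_of_ri hy (self_mem_faceAt (mem_ecomp hφ x))
  have hzk := mem_iInter.1 hz.1 k
  have hxr : x ∈ intrinsicInterior ℝ (Acomp (φ k) x) := by rw [← ho]; exact hx
  exact intrinsicInterior_subset (ri_of_prolong hc hxr hε hzk)

/-- The convex components `C_x` form a convex partition of `ℝ^N`. -/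
theorem stmt12 {N : ℕ} (φ : ℕ → ℕ → E N → ℝ) (hφ : ∀ k n, IsConvexLipschitz (φ k n)) :
    (∀ x : E N, x ∈ Ccomp φ x ∧ (Ccomp φ x).Nonempty ∧ Convex ℝ (Ccomp φ x) ∧
      IsRelOpen (Ccomp φ x)) ∧
    (∀ x y : E N, y ∈ Ccomp φ x → Ccomp φ y = Ccomp φ x) := by
  refine ⟨fun x => ?_, fun x y hy => ?_⟩
  · have hF := convex_faceAt (convex_ecomp hφ x) (mem_ecomp hφ x)
    have hx : x ∈ Ccomp φ x := mem_ri_faceAt (convex_ecomp hφ x) (mem_ecomp hφ x)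
    exact ⟨hx, ⟨x, hx⟩, convex_ri hF, isRelOpen_ri hF⟩
  · have hE : Ecomp φ y = Ecomp φ x := iInter_congr fun k => by
      rw [acomp_eq_of_mem (hφ k) (ccomp_subset_acomp hφ x k hy)]
    unfold Ccomp
    rw [hE, faceAt_eq_of_mem_ri (convex_ecomp hφ x) hy]
end
end
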